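/- arXiv:1207.4437 — 2 statements merged into one kernel-verified Lean document; each statement's English description precedes it below -/
import Mathlib

section
/- For every n ≥ 2, every index 1 ≤ i ≤ n−1, and all integers k_1,…,k_{i−1}, m, k_{i+2},…,k_n, writing t(x,y) := α(n; k_1,…,k_{i−1}, x, y, k_{i+2},…,k_n), the identity t(m, m+2) = t(m,m) + t(m+1,m+1) + t(m+2,m+2) + t(m+2,m+1) + t(m+1,m) holds. -/
/-- A triangular array of size `n`, encoded as a function `ℕ → ℕ → ℤ` whose
meaningful entries are `a i j` for `1 ≤ j ≤ i ≤ n` (row `i` has entries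
`a i 1, …, a i i`), normalized to be `0` outside this region. -/
def IsTri (n : ℕ) (a : ℕ → ℕ → ℤ) : Prop :=
  ∀ i j, ¬ (1 ≤ j ∧ j ≤ i ∧ i ≤ n) → a i j = 0

/-- A Monotone Triangle of size `n`: strict increase along rows and weak
increase along North-East and South-East diagonals. -/
def IsMT (n : ℕ) (a : ℕ → ℕ → ℤ) : Prop :=
  IsTri n a ∧
  (∀ i j, 1 ≤ j → j + 1 ≤ i → i ≤ n → a i j < a i (j + 1)) ∧
  (∀ i j, 1 ≤ j → j ≤ i → i + 1 ≤ n →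
    a (i + 1) j ≤ a i j ∧ a i j ≤ a (i + 1) (j + 1))

/-- A Generalized Monotone Triangle (GMT) of size `n`. -/
def IsGMT (n : ℕ) (a : ℕ → ℕ → ℤ) : Prop :=
  IsTri n a ∧
  -- (1) each entry is weakly bounded by its SW- and SE-neighbour
  (∀ i j, 1 ≤ j → j ≤ i → i + 1 ≤ n →
    min (a (i + 1) j) (a (i + 1) (j + 1)) ≤ a i j ∧
    a i j ≤ max (a (i + 1) j) (a (i + 1) (j + 1))) ∧
  -- (2) three weakly increasing consecutive entries force strict increase above
  (∀ i j, 1 ≤ j → j + 1 ≤ i → i + 1 ≤ n →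
    a (i + 1) j ≤ a (i + 1) (j + 1) → a (i + 1) (j + 1) ≤ a (i + 1) (j + 2) →
    a i j < a i (j + 1)) ∧
  -- (3) equality over a strict descent forces an equal neighbour
  (∀ i j, 1 ≤ j → j ≤ i → i + 1 ≤ n →
    (a i j = a (i + 1) j → a (i + 1) (j + 1) < a (i + 1) j →
      2 ≤ j ∧ a i (j - 1) = a i j) ∧
    (a (i + 1) (j + 1) < a (i + 1) j → a (i + 1) (j + 1) = a i j →
      j + 1 ≤ i ∧ a i (j + 1) = a i j))

/-- The bottom row of a triangular array of size `n` is `(k 0, …, k (n-1))`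
(1-indexed in the array). -/
def BottomRow (n : ℕ) (a : ℕ → ℕ → ℤ) (k : Fin n → ℤ) : Prop :=
  ∀ j : Fin n, a n (j.1 + 1) = k j

/-- The set of Monotone Triangles of size `n` with bottom row `k`. -/
def MTset (n : ℕ) (k : Fin n → ℤ) : Set (ℕ → ℕ → ℤ) :=
  {a | IsMT n a ∧ BottomRow n a k}

/-- The set `𝒢ₙ(k)` of Generalized Monotone Triangles of size `n` with bottom row `k`. -/
def GMTset (n : ℕ) (k : Fin n → ℤ) : Set (ℕ → ℕ → ℤ) :=
  {a | IsGMT n a ∧ BottomRow n a k}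

/-- The positions `(i, j)` of newcomers of a triangular array:
`a (i+1) j > a i j > a (i+1) (j+1)`. -/
def newcomersF (n : ℕ) (a : ℕ → ℕ → ℤ) : Finset (ℕ × ℕ) :=
  ((Finset.range (n + 1)) ×ˢ (Finset.range (n + 1))).filter (fun p =>
    1 ≤ p.2 ∧ p.2 ≤ p.1 ∧ p.1 + 1 ≤ n ∧
    a p.1 p.2 < a (p.1 + 1) p.2 ∧ a (p.1 + 1) (p.2 + 1) < a p.1 p.2)

/-- The positions `(i, j)` of sign-changing pairs `(a i j, a i (j+1))` of a
triangular array: two equal consecutive entries whose interlaced neighbour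
below is also equal to them. -/
def scPairsF (n : ℕ) (a : ℕ → ℕ → ℤ) : Finset (ℕ × ℕ) :=
  ((Finset.range (n + 1)) ×ˢ (Finset.range (n + 1))).filter (fun p =>
    1 ≤ p.2 ∧ p.2 + 1 ≤ p.1 ∧ p.1 + 1 ≤ n ∧
    a p.1 p.2 = a p.1 (p.2 + 1) ∧ a (p.1 + 1) (p.2 + 1) = a p.1 p.2)

/-- `sc(A)`: the total number of newcomers and sign-changing pairs of `A`. -/
def scT (n : ℕ) (a : ℕ → ℕ → ℤ) : ℕ :=
  (newcomersF n a).card + (scPairsF n a).card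

/-- `IsAlpha N f` asserts that `f` is the polynomial function
`α(N; k₁, …, k_N)`: it is given by a polynomial with rational coefficients of
degree at most `N - 1` in each variable, and its value at every strictly
increasing integer sequence equals the number of Monotone Triangles with that
bottom row. -/
def IsAlpha (N : ℕ) (f : (Fin N → ℤ) → ℚ) : Prop :=
  (∃ P : MvPolynomial (Fin N) ℚ, (∀ i : Fin N, P.degreeOf i ≤ N - 1) ∧
    ∀ k : Fin N → ℤ, f k = MvPolynomial.eval (fun i => (k i : ℚ)) P) ∧
  (∀ k : Fin N → ℤ, StrictMono k → f k = ((MTset N k).ncard : ℚ))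

/-- The signed sum of `q` over the half-open interval from `u` to `v`. -/
noncomputable def signedSum (u v : ℤ) (q : ℤ → ℚ) : ℚ :=
  ∑ l ∈ Finset.Ico u v, q l - ∑ l ∈ Finset.Ico v u, q l

theorem signedSum_of_le {u v : ℤ} (h : u ≤ v) (q : ℤ → ℚ) :
    signedSum u v q = ∑ l ∈ Finset.Ico u v, q l := by
  simp [signedSum, Finset.Ico_eq_empty_of_le h]

theorem signedSum_self (u : ℤ) (q : ℤ → ℚ) : signedSum u u q = 0 := by
  simp [signedSum]

theorem signedSum_succ_right (u v : ℤ) (q : ℤ → ℚ) :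
    signedSum u (v + 1) q = signedSum u v q + q v := by
  unfold signedSum
  rcases le_or_gt u v with h | h
  · rw [← Finset.insert_Ico_right_eq_Ico_add_one h, Finset.sum_insert (by simp),
      Finset.Ico_eq_empty_of_le h, Finset.Ico_eq_empty_of_le (h.trans (by lia))]
    simp [add_comm]
  · rw [← Finset.insert_Ico_add_one_left_eq_Ico h, Finset.sum_insert (by simp),
      Finset.Ico_eq_empty_of_le h.le, Finset.Ico_eq_empty_of_le (by lia)]
    ring

theorem signedSum_eq_sub {q Q : ℤ → ℚ} (h : ∀ v, Q (v + 1) = Q v + q v) (u v : ℤ) :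
    signedSum u v q = Q v - Q u := by
  induction v using Int.inductionOn' (b := u) with
  | zero => simp [signedSum_self]
  | succ k _ ih => rw [signedSum_succ_right, ih, h]; ring
  | pred k _ ih =>
    have h1 := signedSum_succ_right u (k - 1) q
    have h2 := h (k - 1)
    rw [sub_add_cancel] at h1 h2
    linarith

theorem signedSum_succ_left (u v : ℤ) (q : ℤ → ℚ) :
    signedSum (u + 1) v q = signedSum u v q - q u := by
  rw [signedSum_eq_sub (Q := (signedSum u · q)) (signedSum_succ_right u · q) (u + 1) v, signedSum_succ_right,
    signedSum_self, zero_add]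

theorem signedSum_add (u v : ℤ) (q r : ℤ → ℚ) :
    signedSum u v (fun l => q l + r l) = signedSum u v q + signedSum u v r := by
  simp only [signedSum, Finset.sum_add_distrib]; ring

theorem signedSum_mul_left (u v : ℤ) (c : ℚ) (q : ℤ → ℚ) :
    signedSum u v (fun l => c * q l) = c * signedSum u v q := by
  simp only [signedSum, ← Finset.mul_sum]; ring

theorem signedSum_mul_right (u v : ℤ) (c : ℚ) (q : ℤ → ℚ) :
    signedSum u v (fun l => q l * c) = signedSum u v q * c := by
  simp only [signedSum, ← Finset.sum_mul]; ring

/-- The local relations between the values of `α` in two adjacent arguments. -/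
structure PairRel (t : ℤ → ℤ → ℚ) : Prop where
  one : ∀ x, t x (x + 1) = t x x + t (x + 1) (x + 1)
  two : ∀ x, t x (x + 2) = t x x + t (x + 1) (x + 1) + t (x + 2) (x + 2) +
    t (x + 2) (x + 1) + t (x + 1) x

namespace PairRel

theorem add {s t : ℤ → ℤ → ℚ} (hs : PairRel s) (ht : PairRel t) :
    PairRel (fun x y => s x y + t x y) :=
  ⟨fun x => by rw [hs.one, ht.one]; ring, fun x => by rw [hs.two, ht.two]; ring⟩

theorem sum (u v : ℤ) {t : ℤ → ℤ → ℤ → ℚ} (ht : ∀ l, PairRel (t l)) :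
    PairRel (fun x y => signedSum u v (fun l => t l x y)) :=
  ⟨fun x => by simp only [(ht _).one, signedSum_add],
    fun x => by simp only [(ht _).two, signedSum_add]⟩

/-- Summation over strictly interlacing rows preserves the relations at the left boundary. -/
theorem interlace_left {F : ℤ → ℤ → ℚ} (hF : PairRel (fun b w => F b w - F b (w + 1))) :
    PairRel (fun x y => signedSum x y (fun b => F b y) + F y (y + 1)) := by
  constructor
  · intro x
    have h0 := hF.one x
    simp only [signedSum_succ_right, signedSum_self]
    linarith
  · intro x
    have h0 := hF.one x
    have h1 := hF.one (x + 1)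
    have h2 := hF.two x
    rw [show x + 2 = x + 1 + 1 by ring] at *
    simp only [signedSum_succ_right, signedSum_succ_left, signedSum_self]
    linarith

/-- Summation over strictly interlacing rows preserves the relations in the interior. -/
theorem interlace {F : ℤ → ℤ → ℤ → ℚ} (u : ℤ) (hF : ∀ w, PairRel (fun a b => F a b w))
    (hG : ∀ a, PairRel (fun b w => F a b w - F a b (w + 1))) :
    PairRel (fun x y =>
      signedSum u x (fun a => signedSum x y (fun b => F a b y) + F a y (y + 1)) +
      (signedSum (x + 1) y (fun b => F x b y) + F x y (y + 1))) := by
  have hK := fun x => sum u x (fun a => interlace_left (hG a))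
  constructor
  · intro x
    have h0 := (hK x).one x
    have g0 := (hG x).one x
    have f1 := (hF (x + 1)).one x
    have f2 := (hF (x + 1 + 1)).one x
    beta_reduce at h0 ⊢
    rw [h0, signedSum_succ_right u x]
    simp only [signedSum_succ_right, signedSum_succ_left, signedSum_self]
    linarith
  · intro x
    have e : x + 2 = x + 1 + 1 := by ring
    have h0 := (hK x).two x
    have g1 := (hG (x + 1)).one x
    have g2 := (hG x).one (x + 1)
    have g3 := (hG (x + 1)).one (x + 1)
    have g4 := (hG x).two x
    have f1 := (hF x).one x
    have f2 := (hF (x + 1)).one x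
    have f3 := (hF (x + 1 + 1)).one x
    have f4 := (hF (x + 1 + 1 + 1)).one x
    have f5 := (hF (x + 1 + 1)).one (x + 1)
    have f6 := (hF (x + 1 + 1 + 1)).one (x + 1)
    have f7 := (hF (x + 1)).two x
    have f8 := (hF (x + 1 + 1)).two x
    beta_reduce at h0 ⊢
    rw [h0, e, signedSum_succ_right u (x + 1), signedSum_succ_right u x, signedSum_succ_right u x]
    simp only [signedSum_succ_right, signedSum_succ_left, signedSum_self]
    rw [e] at g4 f7 f8
    linarith

end PairRel

/-- The sum of `f` over the strictly increasing rows `(l₁, …, lₙ)` interlacing with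
`u, k₁, …, kₙ`, extended to arbitrary integers through signed sums. -/
noncomputable def interlaceSum : (List ℤ → ℚ) → ℤ → List ℤ → ℚ
  | f, _, [] => f []
  | f, u, y :: ks =>
    signedSum u y (fun l => interlaceSum (fun ls => f (l :: ls)) y ks) +
      interlaceSum (fun ls => f (y :: ls)) (y + 1) ks

/-- `interlaceSum` as an operator on functions of a row. -/
noncomputable def interlaceFun (f : List ℤ → ℚ) : List ℤ → ℚ
  | [] => 0
  | k :: ks => interlaceSum f k ks

/-- The extension to all integer sequences of the number of Monotone Triangles of size `n`
with prescribed bottom row. -/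
noncomputable def triangleSum : ℕ → List ℤ → ℚ
  | 0, [] => 1
  | 0, _ :: _ => 0
  | n + 1, ks => interlaceFun (triangleSum n) ks

theorem interlaceSum_add (f g : List ℤ → ℚ) (u : ℤ) (ks : List ℤ) :
    interlaceSum (fun ls => f ls + g ls) u ks = interlaceSum f u ks + interlaceSum g u ks := by
  induction ks generalizing f g u with
  | nil => simp [interlaceSum]
  | cons y ks ih => simp only [interlaceSum, ih, signedSum_add]; ring

theorem interlaceSum_mul_left (c : ℚ) (f : List ℤ → ℚ) (u : ℤ) (ks : List ℤ) :
    interlaceSum (fun ls => c * f ls) u ks = c * interlaceSum f u ks := by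
  induction ks generalizing f u with
  | nil => simp [interlaceSum]
  | cons y ks ih => simp only [interlaceSum, ih, signedSum_mul_left]; ring

theorem interlaceSum_zero (u : ℤ) (ks : List ℤ) : interlaceSum (fun _ => 0) u ks = 0 := by
  simpa using interlaceSum_mul_left 0 (fun _ => 0) u ks

theorem PairRel.interlaceSum {f : ℤ → ℤ → List ℤ → ℚ} (hf : ∀ ls, PairRel (fun a b => f a b ls))
    (u : ℤ) (ks : List ℤ) : PairRel (fun a b => interlaceSum (f a b) u ks) := by
  induction ks generalizing f u with
  | nil => exact hf []
  | cons y ks ih =>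
    exact (PairRel.sum u y fun l => ih (fun ls => hf (l :: ls)) y).add
      (ih (fun ls => hf (y :: ls)) (y + 1))

theorem interlaceSum_cons_sub_succ (f : List ℤ → ℚ) (u y : ℤ) (ks : List ℤ) :
    interlaceSum f u (y :: ks) - interlaceSum f (u + 1) (y :: ks) =
      interlaceSum (fun ls => f (u :: ls)) y ks := by
  simp only [interlaceSum, signedSum_succ_left]; ring

/-- `f` satisfies the pair relations in any two adjacent arguments. -/
def ListRel (f : List ℤ → ℚ) : Prop :=
  ∀ pre post, PairRel (fun x y => f (pre ++ x :: y :: post))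

theorem ListRel.pairRel_interlaceSum_sub {f : List ℤ → ℚ} (hf : ListRel f) (pre post : List ℤ) :
    PairRel (fun b w => interlaceSum (fun ls => f (pre ++ b :: ls)) w post -
      interlaceSum (fun ls => f (pre ++ b :: ls)) (w + 1) post) := by
  cases post with
  | nil => simpa [interlaceSum] using (⟨by simp, by simp⟩ : PairRel fun _ _ => 0)
  | cons z post =>
    simp only [interlaceSum_cons_sub_succ]
    exact PairRel.interlaceSum (fun ls => hf pre ls) z post

theorem ListRel.pairRel_interlaceSum {f : List ℤ → ℚ} (hf : ListRel f) (u : ℤ)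
    (pre post : List ℤ) : PairRel (fun x y => interlaceSum f u (pre ++ x :: y :: post)) := by
  induction pre generalizing f u with
  | nil =>
    exact PairRel.interlace (F := fun a b w => interlaceSum (fun ls => f (a :: b :: ls)) w post) u
      (fun w => PairRel.interlaceSum (fun ls => hf [] ls) w post)
      (fun a => hf.pairRel_interlaceSum_sub [a] post)
  | cons z pre ih =>
    exact (PairRel.sum u z fun l => ih (fun p q => hf (l :: p) q) z).add
      (ih (fun p q => hf (z :: p) q) (z + 1))

theorem ListRel.interlaceFun {f : List ℤ → ℚ} (hf : ListRel f) : ListRel (interlaceFun f) := by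
  intro pre post
  cases pre with
  | nil =>
    exact PairRel.interlace_left (F := fun b w => interlaceSum (fun ls => f (b :: ls)) w post)
      (hf.pairRel_interlaceSum_sub [] post)
  | cons u pre => exact hf.pairRel_interlaceSum u pre post

theorem listRel_triangleSum (n : ℕ) : ListRel (triangleSum n) := by
  induction n with
  | zero =>
    intro pre post
    cases pre <;> simpa [triangleSum] using (⟨by simp, by simp⟩ : PairRel fun _ _ => 0)
  | succ n ih => exact ih.interlaceFun

section Polynomiality

open Polynomial

/-- The product `q₁(x₁) ⋯ qₙ(xₙ)`, and `0` on rows of the wrong length. -/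
noncomputable def prodEval : List ℚ[X] → List ℤ → ℚ
  | [], [] => 1
  | q :: qs, x :: xs => q.eval (x : ℚ) * prodEval qs xs
  | _, _ => 0

/-- Functions of a row that are polynomial in the entries. -/
noncomputable def polyRow : Submodule ℚ (List ℤ → ℚ) :=
  Submodule.span ℚ (Set.range prodEval)

theorem prodEval_mem (qs : List ℚ[X]) : prodEval qs ∈ polyRow :=
  Submodule.subset_span ⟨qs, rfl⟩

theorem map_mem_polyRow (T : (List ℤ → ℚ) →ₗ[ℚ] (List ℤ → ℚ))
    (hT : ∀ qs, T (prodEval qs) ∈ polyRow) {f : List ℤ → ℚ} (hf : f ∈ polyRow) :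
    T f ∈ polyRow := by
  have : polyRow ≤ polyRow.comap T := by
    conv_lhs => rw [polyRow]
    rw [Submodule.span_le]
    rintro _ ⟨qs, rfl⟩
    exact hT qs
  exact this hf

/-- `f ↦ ((x, xs) ↦ q(x) f(xs))`. -/
noncomputable def consMul (q : ℚ[X]) : (List ℤ → ℚ) →ₗ[ℚ] (List ℤ → ℚ) where
  toFun f xs := match xs with
    | [] => 0
    | x :: xs => q.eval (x : ℚ) * f xs
  map_add' f g := by ext (_ | _) <;> simp [mul_add]
  map_smul' c f := by ext (_ | _) <;> simp [mul_left_comm]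

/-- `f ↦ ((x, xs) ↦ q(x) f(x + c, xs))`. -/
noncomputable def headMul (q : ℚ[X]) (c : ℤ) : (List ℤ → ℚ) →ₗ[ℚ] (List ℤ → ℚ) where
  toFun f xs := match xs with
    | [] => 0
    | x :: xs => q.eval (x : ℚ) * f ((x + c) :: xs)
  map_add' f g := by ext (_ | _) <;> simp [mul_add]
  map_smul' c f := by ext (_ | _) <;> simp [mul_left_comm]

theorem consMul_mem (q : ℚ[X]) {f : List ℤ → ℚ} (hf : f ∈ polyRow) : consMul q f ∈ polyRow := by
  refine map_mem_polyRow _ (fun qs => ?_) hf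
  convert prodEval_mem (q :: qs) using 1
  ext (_ | _) <;> simp [consMul, prodEval]

theorem headMul_mem (q : ℚ[X]) (c : ℤ) {f : List ℤ → ℚ} (hf : f ∈ polyRow) :
    headMul q c f ∈ polyRow := by
  refine map_mem_polyRow _ (fun qs => ?_) hf
  cases qs with
  | nil =>
    convert polyRow.zero_mem using 1
    ext (_ | _) <;> simp [headMul, prodEval]
  | cons r qs =>
    convert prodEval_mem (q * r.comp (X + C (c : ℚ)) :: qs) using 1
    ext (_ | _) <;> simp [headMul, prodEval, mul_assoc]

/-- `interlaceFun` as a linear map. -/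
noncomputable def interlaceLin : (List ℤ → ℚ) →ₗ[ℚ] (List ℤ → ℚ) where
  toFun := interlaceFun
  map_add' f g := by
    ext (_ | _)
    · simp [interlaceFun]
    · exact interlaceSum_add ..
  map_smul' c f := by
    ext (_ | _)
    · simp [interlaceFun]
    · exact interlaceSum_mul_left ..

theorem exists_antidifference (q : ℚ[X]) :
    ∃ Q : ℚ[X], ∀ x : ℚ, Q.eval (x + 1) = Q.eval x + q.eval x := by
  induction q using Polynomial.induction_on' with
  | add p q hp hq =>
    obtain ⟨P, hP⟩ := hp
    obtain ⟨Q, hQ⟩ := hq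
    exact ⟨P + Q, fun x => by simp only [eval_add, hP, hQ]; ring⟩
  | monomial n a =>
    refine ⟨C (a / (n + 1)) * Polynomial.bernoulli (n + 1), fun x => ?_⟩
    have : (n : ℚ) + 1 ≠ 0 := by positivity
    rw [eval_mul, add_comm x 1, Polynomial.bernoulli_eval_one_add]
    simp
    field_simp

theorem interlaceFun_prodEval_mem (qs : List ℚ[X]) : interlaceFun (prodEval qs) ∈ polyRow := by
  induction qs with
  | nil =>
    convert prodEval_mem [1] using 1
    ext (_ | ⟨x, _ | ⟨y, xs⟩⟩)
    · simp [interlaceFun, prodEval]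
    · simp [interlaceFun, interlaceSum, prodEval]
    · simp [interlaceFun, interlaceSum, prodEval, interlaceSum_zero, signedSum]
  | cons q qs ih =>
    obtain ⟨Q, hQ⟩ := exists_antidifference q
    convert add_mem (sub_mem (consMul_mem 1 (headMul_mem Q 0 ih))
      (consMul_mem Q (headMul_mem 1 0 ih))) (consMul_mem 1 (headMul_mem q 1 ih)) using 1
    ext (_ | ⟨x, _ | ⟨y, xs⟩⟩)
    · simp [interlaceFun, consMul]
    · simp [interlaceFun, interlaceSum, prodEval, consMul, headMul]
    · have h := signedSum_eq_sub (q := fun l => q.eval (l : ℚ)) (Q := fun l => Q.eval (l : ℚ))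
        (fun v => by push_cast; exact hQ v) x y
      simp [interlaceFun, interlaceSum, prodEval, consMul, headMul, interlaceSum_mul_left,
        signedSum_mul_right, h]
      ring

theorem triangleSum_mem (n : ℕ) : triangleSum n ∈ polyRow := by
  induction n with
  | zero =>
    convert prodEval_mem [] using 1
    ext (_ | _) <;> simp [triangleSum, prodEval]
  | succ n ih => exact map_mem_polyRow interlaceLin interlaceFun_prodEval_mem ih

theorem prodEval_set (qs : List ℚ[X]) (xs : List ℤ) (j : ℕ) :
    ∃ R : ℚ[X], ∀ x : ℤ, prodEval qs (xs.set j x) = R.eval (x : ℚ) := by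
  induction xs generalizing qs j with
  | nil => exact ⟨C (prodEval qs []), by simp⟩
  | cons y ys ih =>
    cases qs with
    | nil => exact ⟨0, fun x => by cases j <;> simp [prodEval]⟩
    | cons q qs =>
      cases j with
      | zero => exact ⟨q * C (prodEval qs ys), by simp [prodEval]⟩
      | succ j =>
        obtain ⟨R, hR⟩ := ih qs j
        exact ⟨C (q.eval (y : ℚ)) * R, by simp [prodEval, hR]⟩

theorem polyRow_set {f : List ℤ → ℚ} (hf : f ∈ polyRow) (xs : List ℤ) (j : ℕ) :
    ∃ R : ℚ[X], ∀ x : ℤ, f (xs.set j x) = R.eval (x : ℚ) := by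
  induction hf using Submodule.span_induction with
  | mem f hf =>
    obtain ⟨qs, rfl⟩ := hf
    exact prodEval_set qs xs j
  | zero => exact ⟨0, by simp⟩
  | add f g _ _ hf hg =>
    obtain ⟨P, hP⟩ := hf
    obtain ⟨Q, hQ⟩ := hg
    exact ⟨P + Q, by simp [hP, hQ]⟩
  | smul c f _ hf =>
    obtain ⟨P, hP⟩ := hf
    exact ⟨C c * P, by simp [hP]⟩

theorem mvPolynomial_eval_update {n : ℕ} (P : MvPolynomial (Fin n) ℚ) (k : Fin n → ℤ) (j : Fin n) :
    ∃ R : ℚ[X], ∀ x : ℤ,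
      MvPolynomial.eval (fun i => (Function.update k j x i : ℚ)) P = R.eval (x : ℚ) := by
  refine ⟨MvPolynomial.aeval (fun i => if i = j then X else C (k i : ℚ)) P, fun x => ?_⟩
  induction P using MvPolynomial.induction_on with
  | C a => simp
  | add p q hp hq => simp only [map_add, eval_add, hp, hq]
  | mul_X p i hp =>
    by_cases hij : i = j
    · subst hij; simp [hp]
    · simp [hp, hij]

/-- Two functions that are polynomial in each variable separately and agree on strictly
increasing sequences agree everywhere. -/
theorem eq_of_eq_on_strictMono {n : ℕ} {f g : (Fin n → ℤ) → ℚ}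
    (hf : ∀ k j, ∃ R : ℚ[X], ∀ x : ℤ, f (Function.update k j x) = R.eval (x : ℚ))
    (hg : ∀ k j, ∃ R : ℚ[X], ∀ x : ℤ, g (Function.update k j x) = R.eval (x : ℚ))
    (h : ∀ k, StrictMono k → f k = g k) (k : Fin n → ℤ) : f k = g k := by
  suffices H : ∀ d ≤ n, ∀ k : Fin n → ℤ,
      (∀ i j : Fin n, i < j → j.1 < n - d → k i < k j) → f k = g k from
    H n le_rfl k (by simp)
  intro d
  induction d with
  | zero => exact fun _ k hk => h k fun i j hij => hk i j hij (by simp)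
  | succ d ih =>
    intro hd k hk
    let j : Fin n := ⟨n - (d + 1), by lia⟩
    obtain ⟨P, hP⟩ := hf k j
    obtain ⟨Q, hQ⟩ := hg k j
    obtain ⟨B, hB⟩ : ∃ B : ℤ, ∀ i, k i ≤ B := by
      obtain ⟨B, hB⟩ := (Set.finite_range k).bddAbove
      exact ⟨B, fun i => hB ⟨i, rfl⟩⟩
    have key : ∀ x : ℤ, B < x → P.eval (x : ℚ) = Q.eval (x : ℚ) := by
      intro x hx
      rw [← hP, ← hQ]
      refine ih (by lia) _ fun a b hab hb => ?_
      have haj : a ≠ j := by rintro rfl; simp [j, Fin.lt_def] at hab; lia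
      rw [Function.update_of_ne haj]
      by_cases hbj : b = j
      · subst hbj; simpa using (hB a).trans_lt hx
      · rw [Function.update_of_ne hbj]
        refine hk a b hab ?_
        have : b.1 ≠ n - (d + 1) := fun e => hbj (Fin.ext e)
        lia
    have hPQ : P = Q := by
      refine Polynomial.eq_of_infinite_eval_eq P Q ?_
      refine Set.Infinite.mono (s := (fun x : ℤ => (x : ℚ)) '' Set.Ioi B) ?_
        ((Set.Ioi_infinite B).image Int.cast_injective.injOn)
      rintro _ ⟨x, hx, rfl⟩
      exact key x hx
    rw [← Function.update_eq_self j k, hP, hQ, hPQ]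

end Polynomiality

section Counting

/-- The strictly increasing rows interlacing with `u` followed by the given row. -/
noncomputable def interlacingRows : ℤ → List ℤ → Finset (List ℤ)
  | _, [] => {[]}
  | u, y :: ks =>
    (Finset.Icc u y).biUnion fun l => (interlacingRows (max y (l + 1)) ks).image (List.cons l)

theorem sum_interlacingRows_cons (f : List ℤ → ℚ) (u y : ℤ) (ks : List ℤ) :
    ∑ ls ∈ interlacingRows u (y :: ks), f ls =
      ∑ l ∈ Finset.Icc u y, ∑ ls ∈ interlacingRows (max y (l + 1)) ks, f (l :: ls) := by
  rw [interlacingRows, Finset.sum_biUnion]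
  · refine Finset.sum_congr rfl fun l _ => Finset.sum_image fun a _ b _ h => ?_
    exact (List.cons.inj h).2
  · intro l _ l' _ hll
    rw [Function.onFun, Finset.disjoint_left]
    intro x hx hx'
    obtain ⟨a, -, rfl⟩ := Finset.mem_image.1 hx
    obtain ⟨b, -, hb⟩ := Finset.mem_image.1 hx'
    exact hll (List.cons.inj hb).1.symm

theorem interlaceSum_eq_sum (f : List ℤ → ℚ) (u : ℤ) (ks : List ℤ)
    (hu : 0 < ks.length → u ≤ ks.getD 0 0)
    (hs : ∀ j, j + 1 < ks.length → ks.getD j 0 < ks.getD (j + 1) 0) :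
    interlaceSum f u ks = ∑ ls ∈ interlacingRows u ks, f ls := by
  induction ks generalizing f u with
  | nil => simp [interlaceSum, interlacingRows]
  | cons y ks ih =>
    have huy : u ≤ y := by simpa using hu
    have hy : 0 < ks.length → y < ks.getD 0 0 := fun h => by simpa using hs 0 (by simpa using h)
    have hs' : ∀ j, j + 1 < ks.length → ks.getD j 0 < ks.getD (j + 1) 0 :=
      fun j hj => by simpa using hs (j + 1) (by simpa using hj)
    rw [sum_interlacingRows_cons, ← Finset.Ico_insert_right huy,
      Finset.sum_insert (by simp), interlaceSum, signedSum_of_le huy, add_comm]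
    congr 1
    · rw [ih _ _ (fun h => hy h) hs', max_eq_right (by lia)]
    · refine Finset.sum_congr rfl fun l hl => ?_
      rw [ih _ _ (fun h => (hy h).le) hs', max_eq_left (by simp at hl; lia)]

theorem mem_interlacingRows (u : ℤ) (ks ls : List ℤ) :
    ls ∈ interlacingRows u ks ↔ ls.length = ks.length ∧ (0 < ks.length → u ≤ ls.getD 0 0) ∧
      (∀ j < ks.length, ls.getD j 0 ≤ ks.getD j 0) ∧
      ∀ j, j + 1 < ks.length →
        ks.getD j 0 ≤ ls.getD (j + 1) 0 ∧ ls.getD j 0 < ls.getD (j + 1) 0 := by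
  induction ks generalizing u ls with
  | nil => simp [interlacingRows]
  | cons y ks ih =>
    cases ls with
    | nil => simp [interlacingRows]
    | cons l ls =>
      have : (l :: ls) ∈ interlacingRows u (y :: ks) ↔
          (u ≤ l ∧ l ≤ y) ∧ ls ∈ interlacingRows (max y (l + 1)) ks := by
        simp [interlacingRows]
      rw [this, ih]
      constructor
      · rintro ⟨⟨h1, h2⟩, h3, h4, h5, h6⟩
        refine ⟨by simpa using h3, fun _ => by simpa using h1, ?_, ?_⟩
        · rintro (_ | j) hj
          · simpa using h2
          · simpa using h5 j (by simpa using hj)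
        · rintro (_ | j) hj
          · have := h4 (by simpa using hj)
            simp only [List.getD_cons_succ, List.getD_cons_zero, zero_add]
            lia
          · simpa using h6 j (by simpa using hj)
      · rintro ⟨h3, h1, h5, h6⟩
        refine ⟨⟨by simpa using h1, by simpa using h5 0⟩, by simpa using h3, fun h => ?_,
          fun j hj => by simpa using h5 (j + 1) (by simpa using hj),
          fun j hj => by simpa using h6 (j + 1) (by simpa using hj)⟩
        have := h6 0 (by simpa using h)
        simp only [List.getD_cons_succ, List.getD_cons_zero, zero_add] at this
        lia

/-- Replace row `n` of a triangular array by the given row. -/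
def setRow (n : ℕ) (ks : List ℤ) (a : ℕ → ℕ → ℤ) : ℕ → ℕ → ℤ :=
  fun i j => if i = n then (if 1 ≤ j then ks.getD (j - 1) 0 else 0) else a i j

theorem setRow_self (n : ℕ) (ks : List ℤ) (a : ℕ → ℕ → ℤ) (j : ℕ) :
    setRow n ks a n (j + 1) = ks.getD j 0 := by
  simp [setRow]

theorem setRow_of_ne {n i : ℕ} (h : i ≠ n) (ks : List ℤ) (a : ℕ → ℕ → ℤ) (j : ℕ) :
    setRow n ks a i j = a i j := by
  simp [setRow, h]

open Classical in
/-- The Monotone Triangles of size `n` with given bottom row, built row by row. -/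
noncomputable def monotoneTriangles : ℕ → List ℤ → Finset (ℕ → ℕ → ℤ)
  | 0, _ => {0}
  | _ + 1, [] => ∅
  | n + 1, k :: ks =>
    (interlacingRows k ks).biUnion fun ls =>
      (monotoneTriangles n ls).image (setRow (n + 1) (k :: ks))

theorem mem_monotoneTriangles {n : ℕ} {ks : List ℤ} (hn : ks.length = n)
    (hs : ∀ j, j + 1 < n → ks.getD j 0 < ks.getD (j + 1) 0) (a : ℕ → ℕ → ℤ) :
    a ∈ monotoneTriangles n ks ↔ IsMT n a ∧ ∀ j < n, a n (j + 1) = ks.getD j 0 := by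
  induction n generalizing ks a with
  | zero =>
    simp only [monotoneTriangles, Finset.mem_singleton, not_lt_zero, false_imp_iff, implies_true,
      and_true]
    constructor
    · rintro rfl
      exact ⟨fun _ _ _ => rfl, fun i j h1 h2 h3 => by lia, fun i j h1 h2 h3 => by lia⟩
    · intro h
      ext i j
      exact h.1 i j (by lia)
  | succ n ih =>
    obtain _ | ⟨k, ks⟩ := ks
    · simp at hn
    have hlen : ks.length = n := by simpa using hn
    simp only [monotoneTriangles, Finset.mem_biUnion, Finset.mem_image, mem_interlacingRows, hlen]
    constructor
    · rintro ⟨ls, ⟨hl, h0, hle, hst⟩, b, hb, rfl⟩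
      rw [ih hl fun j hj => (hst j hj).2] at hb
      obtain ⟨⟨hT, hrow, hdiag⟩, hbot⟩ := hb
      refine ⟨⟨?_, ?_, ?_⟩, fun j _ => setRow_self ..⟩
      · intro i j hij
        by_cases hi : i = n + 1
        · subst hi
          obtain _ | j := j
          · simp [setRow]
          · rw [setRow_self, List.getD_eq_default]
            rw [hn]; lia
        · rw [setRow_of_ne hi]
          exact hT i j (by lia)
      · intro i j h1 h2 h3
        obtain ⟨j, rfl⟩ := Nat.exists_eq_add_of_le' h1
        by_cases hi : i = n + 1
        · subst hi
          rw [setRow_self, setRow_self]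
          exact hs j (by lia)
        · rw [setRow_of_ne hi, setRow_of_ne hi]
          exact hrow i _ h1 h2 (by lia)
      · intro i j h1 h2 h3
        rw [setRow_of_ne (i := i) (by lia)]
        obtain ⟨j, rfl⟩ := Nat.exists_eq_add_of_le' h1
        by_cases hi : i = n
        · subst hi
          rw [setRow_self, setRow_self, hbot j (by lia)]
          refine ⟨?_, by simpa using hle j (by lia)⟩
          obtain _ | j := j
          · simpa using h0 (by lia)
          · simpa using (hst j (by lia)).1
        · rw [setRow_of_ne (by lia), setRow_of_ne (by lia)]
          exact hdiag i _ h1 h2 (by lia)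
    · rintro ⟨⟨hT, hrow, hdiag⟩, hbot⟩
      have hget : ∀ j < n, (List.ofFn fun j : Fin n => a n (j + 1)).getD j 0 = a n (j + 1) := by
        intro j hj
        simp [List.getD_eq_getElem?_getD, hj]
      have hle : ∀ j < n, a n (j + 1) ≤ ks.getD j 0 := by
        intro j hj
        have := (hdiag n (j + 1) (by lia) (by lia) le_rfl).2
        rw [hbot (j + 1) (by lia)] at this
        simpa using this
      have hge : ∀ j < n, (k :: ks).getD j 0 ≤ a n (j + 1) := by
        intro j hj
        rw [← hbot j (by lia)]
        exact (hdiag n (j + 1) (by lia) (by lia) le_rfl).1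
      have hst : ∀ j, j + 1 < n → a n (j + 1) < a n (j + 2) :=
        fun j hj => hrow n (j + 1) (by lia) (by lia) (by lia)
      refine ⟨List.ofFn fun j : Fin n => a n (j + 1), ⟨by simp, ?_, ?_, ?_⟩,
        fun i j => if i = n + 1 then 0 else a i j, ?_, ?_⟩
      · intro h
        rw [hget 0 h]
        simpa using hge 0 h
      · intro j hj
        rw [hget j hj]
        exact hle j hj
      · intro j hj
        rw [hget j (by lia), hget (j + 1) hj]
        exact ⟨by simpa using hge (j + 1) hj, hst j hj⟩
      · rw [ih (by simp) fun j hj => by rw [hget j (by lia), hget (j + 1) hj]; exact hst j hj]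
        refine ⟨⟨?_, ?_, ?_⟩, ?_⟩
        · intro i j hij
          beta_reduce
          split_ifs with hi
          · rfl
          · exact hT i j (by lia)
        · intro i j h1 h2 h3
          simp only [show i ≠ n + 1 by lia, if_false]
          exact hrow i j h1 h2 (by lia)
        · intro i j h1 h2 h3
          simp only [show i ≠ n + 1 by lia, show i ≠ n by lia, add_left_inj, if_false]
          exact hdiag i j h1 h2 (by lia)
        · intro j hj
          rw [hget j hj]
          simp
      · ext i j
        by_cases hi : i = n + 1
        · subst hi
          obtain _ | j := j
          · simpa [setRow] using (hT (n + 1) 0 (by lia)).symm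
          · rw [setRow_self]
            by_cases hj : j < n + 1
            · exact (hbot j hj).symm
            · rw [hT _ _ (by lia), List.getD_eq_default]
              rw [hn]; lia
        · simp [setRow_of_ne hi, hi]

open Classical in
theorem card_monotoneTriangles {n : ℕ} {ks : List ℤ} (hn : ks.length = n)
    (hs : ∀ j, j + 1 < n → ks.getD j 0 < ks.getD (j + 1) 0) :
    ((monotoneTriangles n ks).card : ℚ) = triangleSum n ks := by
  induction n generalizing ks with
  | zero =>
    obtain rfl := List.length_eq_zero_iff.1 hn
    simp [monotoneTriangles, triangleSum]
  | succ n ih =>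
    obtain _ | ⟨k, ks⟩ := ks
    · simp at hn
    have hlen : ks.length = n := by simpa using hn
    have hrows : ∀ ls ∈ interlacingRows k ks, ls.length = n ∧
        ∀ j, j + 1 < n → ls.getD j 0 < ls.getD (j + 1) 0 := by
      intro ls hls
      rw [mem_interlacingRows, hlen] at hls
      exact ⟨hls.1, fun j hj => (hls.2.2.2 j hj).2⟩
    rw [triangleSum, interlaceFun, interlaceSum_eq_sum _ _ _
      (fun h => by simpa using (hs 0 (by lia)).le)
      (fun j hj => by simpa using hs (j + 1) (by lia)), monotoneTriangles, Finset.card_biUnion]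
    · push_cast
      refine Finset.sum_congr rfl fun ls hls => ?_
      obtain ⟨hl, hst⟩ := hrows ls hls
      rw [← ih hl hst, Finset.card_image_of_injOn]
      intro b hb c hc hbc
      have hb := (mem_monotoneTriangles hl hst b).1 hb
      have hc := (mem_monotoneTriangles hl hst c).1 hc
      ext i j
      by_cases hi : i = n + 1
      · rw [hb.1.1 i j (by lia), hc.1.1 i j (by lia)]
      · simpa [setRow_of_ne hi] using congrFun (congrFun hbc i) j
    · intro ls hls ls' hls' hne
      obtain ⟨hl, hst⟩ := hrows ls hls
      obtain ⟨hl', hst'⟩ := hrows ls' hls'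
      rw [Function.onFun, Finset.disjoint_left]
      intro x hx hx'
      obtain ⟨b, hb, rfl⟩ := Finset.mem_image.1 hx
      obtain ⟨c, hc, hbc⟩ := Finset.mem_image.1 hx'
      have hb := (mem_monotoneTriangles hl hst b).1 hb
      have hc := (mem_monotoneTriangles hl' hst' c).1 hc
      refine hne (List.ext_getElem (hl.trans hl'.symm) fun j h1 h2 => ?_)
      have := congrFun (congrFun hbc n) (j + 1)
      rw [setRow_of_ne (by lia), setRow_of_ne (by lia), hb.2 j (by lia), hc.2 j (by lia)] at this
      simpa [List.getD_eq_getElem?_getD, h1, h2] using this.symm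

theorem ncard_MTset {n : ℕ} {k : Fin n → ℤ} (hk : StrictMono k) :
    ((MTset n k).ncard : ℚ) = triangleSum n (List.ofFn k) := by
  have hget : ∀ j : Fin n, (List.ofFn k).getD j 0 = k j := by
    intro j
    simp [List.getD_eq_getElem?_getD]
  have hs : ∀ j, j + 1 < n → (List.ofFn k).getD j 0 < (List.ofFn k).getD (j + 1) 0 := by
    intro j hj
    have h1 := hget ⟨j, by lia⟩
    have h2 := hget ⟨j + 1, hj⟩
    simp only at h1 h2
    rw [h1, h2]
    exact hk (by simp [Fin.lt_def])
  rw [← card_monotoneTriangles (by simp) hs, ← Set.ncard_coe_finset]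
  congr 2
  ext a
  rw [Finset.mem_coe, mem_monotoneTriangles (by simp) hs]
  refine and_congr_right fun _ => ⟨fun h j hj => ?_, fun h j => ?_⟩
  · exact (h ⟨j, hj⟩).trans (hget ⟨j, hj⟩).symm
  · exact (h j j.2).trans (hget j)

end Counting

theorem List.ofFn_update {α : Type*} {n : ℕ} (k : Fin n → α) (j : Fin n) (x : α) :
    List.ofFn (Function.update k j x) = (List.ofFn k).set j x := by
  refine List.ext_getElem (by simp) fun i h1 h2 => ?_
  by_cases h : i = j
  · subst h; simp
  · have : (⟨i, by simpa using h1⟩ : Fin n) ≠ j := fun e => h (congrArg Fin.val e)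
    simp [Function.update_of_ne this, List.getElem_set_of_ne (Ne.symm h)]

theorem IsAlpha.eq_triangleSum {n : ℕ} {α : (Fin n → ℤ) → ℚ} (hα : IsAlpha n α)
    (k : Fin n → ℤ) : α k = triangleSum n (List.ofFn k) := by
  obtain ⟨⟨P, -, hP⟩, hcount⟩ := hα
  refine eq_of_eq_on_strictMono (g := fun k => triangleSum n (List.ofFn k)) (fun k j => ?_)
    (fun k j => ?_) (fun k hk => (hcount k hk).trans (ncard_MTset hk)) k
  · simpa only [hP] using mvPolynomial_eval_update P k j
  · simpa only [List.ofFn_update] using polyRow_set (triangleSum_mem n) (List.ofFn k) j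

theorem List.ofFn_pair {n p : ℕ} (hp : p + 1 < n) (k : Fin n → ℤ) (x y : ℤ) :
    List.ofFn (fun j : Fin n => if j.1 = p then x else if j.1 = p + 1 then y else k j) =
      (List.ofFn k).take p ++ x :: y :: (List.ofFn k).drop (p + 2) := by
  refine List.ext_getElem (by simp; lia) fun i h1 h2 => ?_
  rw [List.length_ofFn] at h1
  rcases lt_trichotomy i p with h | rfl | h
  · rw [List.getElem_append_left (by simp; lia)]
    simp [h.ne, show i ≠ p + 1 by lia]
  · rw [List.getElem_append_right (by simp)]
    simp [show min i n = i by lia]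
  · obtain ⟨d, rfl⟩ := Nat.exists_eq_add_of_lt h
    rw [List.getElem_append_right (by simp; lia)]
    obtain _ | d := d
    · simp [show min p n = p by lia]
    · simp [show min p n = p by lia, show p + (d + 1) + 1 - p = d + 1 + 1 by lia,
        show p + 2 + d = p + (d + 1) + 1 by lia]
      lia

/-- For every `n ≥ 2`, every (0-indexed) position `p` with `p + 1 < n`, and all
integers `k₁,…` and `m`: writing `t(x,y)` for `α` evaluated with `(x,y)` in
positions `p, p+1`, the identity
`t(m, m+2) = t(m,m) + t(m+1,m+1) + t(m+2,m+2) + t(m+2,m+1) + t(m+1,m)` holds. -/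
theorem alpha_pair_identity_two (n : ℕ) (hn : 2 ≤ n) (p : ℕ) (hp : p + 1 < n)
    (α : (Fin n → ℤ) → ℚ) (hα : IsAlpha n α) (k : Fin n → ℤ) (m : ℤ) :
    α (fun j => if j.1 = p then m else if j.1 = p + 1 then m + 2 else k j) =
      α (fun j => if j.1 = p then m else if j.1 = p + 1 then m else k j) +
      α (fun j => if j.1 = p then m + 1 else if j.1 = p + 1 then m + 1 else k j) +
      α (fun j => if j.1 = p then m + 2 else if j.1 = p + 1 then m + 2 else k j) +
      α (fun j => if j.1 = p then m + 2 else if j.1 = p + 1 then m + 1 else k j) +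
      α (fun j => if j.1 = p then m + 1 else if j.1 = p + 1 then m else k j) := by
  have h := (listRel_triangleSum n ((List.ofFn k).take p) ((List.ofFn k).drop (p + 2))).two m
  simpa only [hα.eq_triangleSum, List.ofFn_pair hp] using h
end

section
/- For every n ≥ 2, α(n+1; 2, 1, 2, 3, …, n) = −Σ_{j=2}^{n} (j−1)·α(n−1; 1, 2, …, j−1, j+1, …, n), where α(n−1; 1,…,j−1,j+1,…,n) counts the Monotone Triangles of size n−1 with bottom row (1,…,n) with the entry j deleted (this count equals the number of Alternating Sign Matrices of size n whose first row has its unique 1 in column j). -/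
open Finset in
/-- The strictly increasing rows that may stand above the row `k` in a Monotone Triangle. -/
noncomputable def interlacing {n : ℕ} (k : Fin (n + 1) → ℤ) : Finset (Fin n → ℤ) :=
  open Classical in
  (Fintype.piFinset fun i : Fin n => Icc (k i.castSucc) (k i.succ)).filter StrictMono

theorem mem_interlacing {n : ℕ} {k : Fin (n + 1) → ℤ} {l : Fin n → ℤ} :
    l ∈ interlacing k ↔ (∀ i, k i.castSucc ≤ l i ∧ l i ≤ k i.succ) ∧ StrictMono l := by
  simp [interlacing, Fintype.mem_piFinset]

/-- The number of Monotone Triangles with bottom row `k`, computed row by row. -/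
noncomputable def mtCount : (n : ℕ) → (Fin n → ℤ) → ℕ
  | 0, _ => 1
  | n + 1, k => ∑ l ∈ interlacing k, mtCount n l

/-- The array `a` of size `n` extended by the row `k` at the bottom. -/
def appendRow {n : ℕ} (k : Fin (n + 1) → ℤ) (a : ℕ → ℕ → ℤ) : ℕ → ℕ → ℤ := fun i j =>
  if i = n + 1 then (if h : 1 ≤ j ∧ j ≤ n + 1 then k ⟨j - 1, by omega⟩ else 0) else a i j

/-- The array `a` with all rows after the `n`-th one replaced by zero. -/
def dropRows (n : ℕ) (a : ℕ → ℕ → ℤ) : ℕ → ℕ → ℤ := fun i j => if i ≤ n then a i j else 0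

theorem appendRow_mem_MTset {n : ℕ} {k : Fin (n + 1) → ℤ} (hk : StrictMono k) {l : Fin n → ℤ}
    (hl : l ∈ interlacing k) {a : ℕ → ℕ → ℤ} (ha : a ∈ MTset n l) :
    appendRow k a ∈ MTset (n + 1) k := by
  obtain ⟨⟨htri, hrow, hdiag⟩, hbot⟩ := ha
  rw [mem_interlacing] at hl
  refine ⟨⟨?_, ?_, ?_⟩, ?_⟩
  · intro i j hij
    unfold appendRow
    split_ifs with h1 h2
    · omega
    · rfl
    · exact htri i j (by omega)
  · intro i j hj hji hi
    unfold appendRow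
    split_ifs with h1 h2 h3
    · exact hk (by simp [Fin.lt_def]; omega)
    all_goals first | omega | exact hrow i j hj hji (by omega)
  · intro i j hj hji hi
    rcases Nat.lt_or_ge i n with hin | hin
    · have h1 : i ≠ n := by omega
      have h2 : i ≠ n + 1 := by omega
      simpa [appendRow, h1, h2] using hdiag i j hj hji (by omega)
    · obtain rfl : i = n := by omega
      have hb := hbot ⟨j - 1, by omega⟩
      have hi := hl.1 ⟨j - 1, by omega⟩
      have h2 : j - 1 + 1 = j := by omega
      simp only [h2, Fin.castSucc_mk, Fin.succ_mk] at hb hi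
      have h3 : j ≤ i + 1 := by omega
      simpa [appendRow, hj, hji, hb, h3] using hi
  · intro j
    have := j.2
    simp [appendRow, Nat.lt_succ_iff.1 this]

theorem dropRows_mem_MTset {n : ℕ} {k : Fin (n + 1) → ℤ} {a : ℕ → ℕ → ℤ}
    (ha : a ∈ MTset (n + 1) k) :
    (fun j : Fin n => a n (j.1 + 1)) ∈ interlacing k ∧
      dropRows n a ∈ MTset n (fun j : Fin n => a n (j.1 + 1)) := by
  obtain ⟨⟨htri, hrow, hdiag⟩, hbot⟩ := ha
  refine ⟨mem_interlacing.2 ⟨?_, ?_⟩, ⟨?_, ?_, ?_⟩, ?_⟩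
  · intro i
    have := i.2
    have h := hdiag n (i.1 + 1) (by omega) (by omega) le_rfl
    have h1 := hbot i.castSucc
    have h2 := hbot i.succ
    simp only [Fin.val_castSucc, Fin.val_succ] at h1 h2
    rwa [h1, h2] at h
  · rcases n with _ | n
    · exact fun i => i.elim0
    · refine Fin.strictMono_iff_lt_succ.2 fun i => ?_
      have := i.2
      simpa using hrow (n + 1) (i.1 + 1) (by omega) (by omega) (by omega)
  · intro i j hij
    unfold dropRows
    split_ifs with h
    · exact htri i j (by omega)
    · rfl
  · intro i j hj hji hi
    simpa [dropRows, hi] using hrow i j hj hji (by omega)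
  · intro i j hj hji hi
    have h : i ≤ n := by omega
    simpa [dropRows, hi, h] using hdiag i j hj hji (by omega)
  · intro j
    simp [dropRows]

/-- Removing the bottom row of a Monotone Triangle. -/
noncomputable def mtSetEquiv {n : ℕ} {k : Fin (n + 1) → ℤ} (hk : StrictMono k) :
    MTset (n + 1) k ≃ Σ l : interlacing k, MTset n l.1 where
  toFun a := ⟨⟨_, (dropRows_mem_MTset a.2).1⟩, ⟨_, (dropRows_mem_MTset a.2).2⟩⟩
  invFun p := ⟨_, appendRow_mem_MTset hk p.1.2 p.2.2⟩
  left_inv := by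
    rintro ⟨a, ⟨htri, -, -⟩, hbot⟩
    ext i j
    simp only [appendRow, dropRows]
    split_ifs with h1 h2 h3
    · have := hbot ⟨j - 1, by omega⟩
      simp only [show j - 1 + 1 = j by omega] at this
      rw [← this, h1]
    · exact (htri i j (by omega)).symm
    · rfl
    · exact (htri i j (by omega)).symm
  right_inv := by
    rintro ⟨⟨l, hl⟩, ⟨a, ⟨htri, hrow, hdiag⟩, hbot⟩⟩
    have h1 : (fun j : Fin n => appendRow k a n (j.1 + 1)) = l := by
      ext j
      simpa [appendRow] using hbot j
    have h2 : dropRows n (appendRow k a) = a := by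
      ext i j
      simp only [appendRow, dropRows]
      split_ifs with h3 h4 h5
      · omega
      · omega
      · rfl
      · exact (htri i j (by omega)).symm
    refine Sigma.ext (Subtype.ext h1) ?_
    refine (Subtype.heq_iff_coe_eq ?_).2 h2
    intro x
    simp only [h1]

theorem finite_and_card_MTset (n : ℕ) (k : Fin n → ℤ) (hk : StrictMono k) :
    Finite (MTset n k) ∧ Nat.card (MTset n k) = mtCount n k := by
  induction n with
  | zero =>
    have h : MTset 0 k = {fun _ _ => 0} := by
      ext a
      constructor
      · rintro ⟨⟨htri, -, -⟩, -⟩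
        ext i j
        exact htri i j (by omega)
      · rintro rfl
        exact ⟨⟨fun _ _ _ => rfl, fun i j h1 h2 h3 => by omega,
          fun i j h1 h2 h3 => by omega⟩, fun j => j.elim0⟩
    rw [h]
    exact ⟨inferInstance, by simp [mtCount]⟩
  | succ n ih =>
    have hfin : ∀ l : interlacing k, Finite (MTset n l.1) := fun l =>
      (ih l.1 (mem_interlacing.1 l.2).2).1
    refine ⟨Finite.of_equiv _ (mtSetEquiv hk).symm, ?_⟩
    rw [Nat.card_congr (mtSetEquiv hk), Nat.card_sigma, mtCount, ← Finset.sum_coe_sort (interlacing k) (mtCount n)]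
    refine Finset.sum_congr rfl fun (l : interlacing k) _ => ?_
    exact (ih l.1 (mem_interlacing.1 l.2).2).2

theorem IsAlpha.eq_mtCount {N : ℕ} {f : (Fin N → ℤ) → ℚ} (hf : IsAlpha N f) {k : Fin N → ℤ}
    (hk : StrictMono k) : f k = mtCount N k := by
  rw [hf.2 k hk, ← (finite_and_card_MTset N k hk).2, Nat.card_coe_set_eq]

open Polynomial

theorem exists_antidifference_s17 (R : ℚ[X]) (c : ℤ) :
    ∃ S : ℚ[X], (∀ x : ℚ, S.eval x = S.eval (x + 1) + R.eval x) ∧ S.eval (c : ℚ) = 0 := by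
  have h : ∃ S : ℚ[X], ∀ x : ℚ, S.eval x = S.eval (x + 1) + R.eval x := by
    induction R using Polynomial.induction_on' with
    | add p q hp hq =>
      obtain ⟨S, hS⟩ := hp
      obtain ⟨T, hT⟩ := hq
      exact ⟨S + T, fun x => by rw [eval_add, eval_add, eval_add, hS, hT]; ring⟩
    | monomial n a =>
      refine ⟨C (-a / (n + 1)) * Polynomial.bernoulli (n + 1), fun x => ?_⟩
      have hn : (n : ℚ) + 1 ≠ 0 := by positivity
      rw [eval_mul, eval_mul, eval_C, eval_C, add_comm x 1, Polynomial.bernoulli_eval_one_add,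
        eval_monomial]
      push_cast
      field_simp
      ring
  obtain ⟨S, hS⟩ := h
  refine ⟨S - C (S.eval (c : ℚ)), fun x => ?_, by simp⟩
  rw [eval_sub, eval_sub, hS]
  simp only [eval_C]
  ring

/-- The polynomial whose value at an integer `x ≤ c` is `∑ y ∈ Ico x c, R y`. -/
noncomputable def sumBelow (R : ℚ[X]) (c : ℤ) : ℚ[X] := (exists_antidifference_s17 R c).choose

theorem sumBelow_eval (R : ℚ[X]) (c : ℤ) (x : ℚ) :
    (sumBelow R c).eval x = (sumBelow R c).eval (x + 1) + R.eval x :=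
  (exists_antidifference_s17 R c).choose_spec.1 x

theorem sumBelow_eval_self (R : ℚ[X]) (c : ℤ) : (sumBelow R c).eval (c : ℚ) = 0 :=
  (exists_antidifference_s17 R c).choose_spec.2

theorem sumBelow_eval_of_le (R : ℚ[X]) {c x : ℤ} (hx : x ≤ c) :
    (sumBelow R c).eval (x : ℚ) = ∑ y ∈ Finset.Ico x c, R.eval (y : ℚ) := by
  induction x, hx using Int.leInductionDown with
  | base => simp [sumBelow_eval_self]
  | pred x hx ih =>
    rw [sumBelow_eval, ← Finset.sum_Ioo_add_eq_sum_Ico (by omega : x - 1 < c),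
      show Finset.Ioo (x - 1) c = Finset.Ico x c by ext; simp, ← ih]
    push_cast
    ring_nf

open Classical in
/-- The polynomial in `x` that extrapolates the number of Monotone Triangles with bottom row
`(x, m)`. -/
noncomputable def mtPoly : (n : ℕ) → (Fin n → ℤ) → ℚ[X]
  | 0, _ => 1
  | n + 1, m =>
    sumBelow (∑ t ∈ interlacing m, mtPoly n t) (m 0) +
      C (∑ t ∈ interlacing m with StrictMono (Fin.cons (m 0) t : Fin (n + 1) → ℤ),
        (mtCount (n + 1) (Fin.cons (m 0) t) : ℚ))

theorem strictMono_cons {n : ℕ} {x : ℤ} {m : Fin (n + 1) → ℤ} :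
    StrictMono (Fin.cons x m : Fin (n + 2) → ℤ) ↔ x < m 0 ∧ StrictMono m := by
  rw [Fin.strictMono_iff_lt_succ, Fin.forall_fin_succ, Fin.strictMono_iff_lt_succ]
  simp

theorem strictMono_cons_of_interlacing {n : ℕ} {y : ℤ} {m : Fin (n + 1) → ℤ} {t : Fin n → ℤ}
    (ht : t ∈ interlacing m) (hy : y < m 0) : StrictMono (Fin.cons y t : Fin (n + 1) → ℤ) := by
  rw [mem_interlacing] at ht
  rcases n with _ | n
  · exact fun i j hij => by omega
  · exact strictMono_cons.2 ⟨hy.trans_le (by simpa using (ht.1 0).1), ht.2⟩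

theorem cons_mem_interlacing {n : ℕ} {x y : ℤ} {m : Fin (n + 1) → ℤ} {t : Fin n → ℤ} :
    (Fin.cons y t : Fin (n + 1) → ℤ) ∈ interlacing (Fin.cons x m : Fin (n + 2) → ℤ) ↔
      (x ≤ y ∧ y ≤ m 0) ∧ t ∈ interlacing m ∧ StrictMono (Fin.cons y t : Fin (n + 1) → ℤ) := by
  rw [mem_interlacing, mem_interlacing, Fin.forall_fin_succ]
  have h : StrictMono (Fin.cons y t : Fin (n + 1) → ℤ) → StrictMono t := fun h i j hij => by
    simpa using h (Fin.succ_lt_succ_iff.2 hij)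
  simp only [Fin.castSucc_zero, Fin.cons_zero, Fin.cons_succ, ← Fin.succ_castSucc]
  tauto

open Classical in
theorem mtCount_cons {n : ℕ} {x : ℤ} {m : Fin (n + 1) → ℤ} (hx : x < m 0) :
    mtCount (n + 2) (Fin.cons x m) =
      (∑ t ∈ interlacing m, ∑ y ∈ Finset.Ico x (m 0), mtCount (n + 1) (Fin.cons y t)) +
      ∑ t ∈ interlacing m with StrictMono (Fin.cons (m 0) t : Fin (n + 1) → ℤ),
        mtCount (n + 1) (Fin.cons (m 0) t) := by
  have h1 : mtCount (n + 2) (Fin.cons x m) =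
      ∑ p ∈ interlacing m ×ˢ Finset.Icc x (m 0) with
        StrictMono (Fin.cons p.2 p.1 : Fin (n + 1) → ℤ),
        mtCount (n + 1) (Fin.cons p.2 p.1) := by
    rw [mtCount]
    symm
    refine Finset.sum_bij (fun p _ => (Fin.cons p.2 p.1 : Fin (n + 1) → ℤ)) ?_ ?_ ?_ ?_
    · rintro ⟨t, y⟩ hp
      simp only [Finset.mem_filter, Finset.mem_product, Finset.mem_Icc] at hp
      exact cons_mem_interlacing.2 ⟨hp.1.2, hp.1.1, hp.2⟩
    · rintro ⟨t, y⟩ - ⟨t', y'⟩ - h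
      have := Fin.cons_injective2 h
      exact Prod.ext this.2 this.1
    · intro l hl
      rw [← Fin.cons_self_tail l, cons_mem_interlacing] at hl
      refine ⟨(Fin.tail l, l 0), ?_, Fin.cons_self_tail l⟩
      simp only [Finset.mem_filter, Finset.mem_product, Finset.mem_Icc]
      exact ⟨⟨hl.2.1, hl.1⟩, hl.2.2⟩
    · intro _ _
      rfl
  rw [h1, Finset.sum_filter, Finset.sum_product, Finset.sum_filter, ← Finset.sum_add_distrib]
  refine Finset.sum_congr rfl fun t ht => ?_
  rw [← Finset.sum_Ico_add_eq_sum_Icc hx.le]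
  congr 1
  refine Finset.sum_congr rfl fun y hy => ?_
  rw [if_pos (strictMono_cons_of_interlacing ht (Finset.mem_Ico.1 hy).2)]

theorem mtPoly_eval {n : ℕ} {m : Fin n → ℤ} {x : ℤ}
    (hx : StrictMono (Fin.cons x m : Fin (n + 1) → ℤ)) :
    (mtPoly n m).eval (x : ℚ) = mtCount (n + 1) (Fin.cons x m) := by
  induction n generalizing x with
  | zero =>
    have h : interlacing (Fin.cons x m : Fin 1 → ℤ) = {Fin.elim0} := by
      ext l
      simp [mem_interlacing, Subsingleton.strictMono, Subsingleton.elim l Fin.elim0]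
    simp [mtPoly, mtCount, h]
  | succ n ih =>
    have hlt := (strictMono_cons.1 hx).1
    rw [mtCount_cons hlt, mtPoly, eval_add, eval_C, sumBelow_eval_of_le _ hlt.le]
    push_cast
    congr 1
    rw [Finset.sum_comm (s := interlacing m)]
    refine Finset.sum_congr rfl fun y hy => ?_
    rw [eval_finsetSum]
    refine Finset.sum_congr rfl fun t ht => ?_
    exact ih (strictMono_cons_of_interlacing ht (Finset.mem_Ico.1 hy).2)

open Classical in
theorem mtPoly_eval_head {n : ℕ} (m : Fin (n + 1) → ℤ) :
    (mtPoly (n + 1) m).eval (m 0 : ℚ) =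
      ∑ t ∈ interlacing m with StrictMono (Fin.cons (m 0) t : Fin (n + 1) → ℤ),
        (mtCount (n + 1) (Fin.cons (m 0) t) : ℚ) := by
  rw [mtPoly, eval_add, sumBelow_eval_self, eval_C, zero_add]

theorem mtPoly_eval_head_add_one {n : ℕ} (m : Fin (n + 2) → ℤ) :
    (mtPoly (n + 2) m).eval ((m 0 : ℚ) + 1) =
      - ∑ t ∈ interlacing m with t 0 = m 0, (mtPoly (n + 1) t).eval (m 0 : ℚ) := by
  classical
  have h := sumBelow_eval (∑ t ∈ interlacing m, mtPoly (n + 1) t) (m 0) (m 0 : ℚ)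
  rw [sumBelow_eval_self, eval_finsetSum] at h
  rw [mtPoly, eval_add, eval_C]
  have hsplit := Finset.sum_filter_add_sum_filter_not (interlacing m) (fun t => t 0 = m 0)
    (fun t => (mtPoly (n + 1) t).eval (m 0 : ℚ))
  have heq : ∑ t ∈ interlacing m with ¬ t 0 = m 0, (mtPoly (n + 1) t).eval (m 0 : ℚ) =
      ∑ t ∈ interlacing m with StrictMono (Fin.cons (m 0) t : Fin (n + 2) → ℤ),
        (mtCount (n + 2) (Fin.cons (m 0) t) : ℚ) := by
    refine Finset.sum_congr (Finset.filter_congr fun t ht => ?_) fun t ht => ?_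
    · rw [mem_interlacing] at ht
      have := (ht.1 0).1
      simp only [Fin.castSucc_zero] at this
      rw [strictMono_cons]
      exact ⟨fun h => ⟨by omega, ht.2⟩, fun h => by omega⟩
    · exact mtPoly_eval (Finset.mem_filter.1 ht).2
  linarith

/-- The row `(1, …, n + 1)` with the entry `j` deleted. -/
def skipRow (n j : ℕ) : Fin n → ℤ := fun t => if t.1 + 1 < j then (t.1 : ℤ) + 1 else (t.1 : ℤ) + 2

theorem skipRow_strictMono (n j : ℕ) : StrictMono (skipRow n j) := by
  intro s t hst
  rw [Fin.lt_def] at hst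
  unfold skipRow
  split_ifs <;> omega

theorem skipRow_zero_eq_one {n j : ℕ} : skipRow (n + 1) j 0 = 1 ↔ 2 ≤ j := by
  simp [skipRow]
  omega

theorem skipRow_le_iff {n i j : ℕ} (hj : j ≤ n + 1) (hi : 1 ≤ i) :
    (∀ t, skipRow n i t ≤ skipRow n j t) ↔ j ≤ i := by
  constructor
  · intro h
    by_contra! hlt
    have := h ⟨i - 1, by omega⟩
    simp only [skipRow] at this
    split_ifs at this <;> omega
  · intro h t
    unfold skipRow
    split_ifs <;> omega

theorem skipRow_injOn (n : ℕ) : Set.InjOn (skipRow n) (Finset.Icc 1 (n + 1) : Finset ℕ) := by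
  intro i hi j hj h
  simp only [Finset.coe_Icc, Set.mem_Icc] at hi hj
  exact le_antisymm ((skipRow_le_iff hi.2 hj.1).1 fun t => by rw [h])
    ((skipRow_le_iff hj.2 hi.1).1 fun t => by rw [h])

theorem exists_eq_skipRow {n : ℕ} {u : Fin n → ℤ} (hu : StrictMono u)
    (h : ∀ t, (t.1 : ℤ) + 1 ≤ u t ∧ u t ≤ t.1 + 2) :
    ∃ j, 1 ≤ j ∧ j ≤ n + 1 ∧ u = skipRow n j := by
  induction n with
  | zero => exact ⟨1, le_rfl, le_rfl, Subsingleton.elim _ _⟩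
  | succ n ih =>
    obtain ⟨j, hj1, hjn, hj⟩ := ih (u := fun t => u t.castSucc)
      (fun s t hst => hu (by simpa using hst)) (fun t => by simpa using h t.castSucc)
    have hlast := h (Fin.last n)
    simp only [Fin.val_last] at hlast
    have hinit : ∀ t : Fin n, u t.castSucc = skipRow n j t := fun t => congrFun hj t
    by_cases hcase : u (Fin.last n) = n + 2
    · refine ⟨j, hj1, by omega, ?_⟩
      ext t
      refine Fin.lastCases ?_ (fun t => ?_) t
      · simp only [skipRow, Fin.val_last, hcase]
        rw [if_neg (by omega)]
      · simp [hinit, skipRow]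
    · have hj' : j = n + 1 := by
        by_contra hne
        have h1 := hinit ⟨n - 1, by omega⟩
        have h2 := hu (Fin.castSucc_lt_last ⟨n - 1, by omega⟩)
        rw [h1] at h2
        simp only [skipRow] at h2
        split_ifs at h2 <;> omega
      refine ⟨n + 2, by omega, by omega, ?_⟩
      ext t
      refine Fin.lastCases ?_ (fun t => ?_) t
      · simp [skipRow]
        omega
      · have := t.2
        simp only [hinit, skipRow, Fin.val_castSucc]
        rw [if_pos (by omega), if_pos (by omega)]

theorem interlacing_succ_filter (n : ℕ) :
    {t ∈ interlacing (fun i : Fin (n + 2) => (i.1 : ℤ) + 1) | t 0 = 1} =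
      (Finset.Icc 2 (n + 2)).image (skipRow (n + 1)) := by
  ext u
  simp only [Finset.mem_filter, mem_interlacing, Finset.mem_image, Finset.mem_Icc,
    Fin.val_castSucc, Fin.val_succ]
  constructor
  · rintro ⟨⟨h1, h2⟩, h3⟩
    obtain ⟨j, hj1, hjn, rfl⟩ := exists_eq_skipRow h2
      fun t => ⟨(h1 t).1, (h1 t).2.trans (by push_cast; omega)⟩
    exact ⟨j, ⟨skipRow_zero_eq_one.1 h3, hjn⟩, rfl⟩
  · rintro ⟨j, hj, rfl⟩
    refine ⟨⟨fun t => ?_, skipRow_strictMono _ _⟩, ?_⟩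
    · unfold skipRow
      push_cast
      split_ifs <;> omega
    · exact skipRow_zero_eq_one.2 hj.1

open Classical in
theorem image_cons_interlacing_skipRow {n j : ℕ} (hj : 2 ≤ j) (hjn : j ≤ n + 2) :
    ({s ∈ interlacing (skipRow (n + 1) j) | StrictMono (Fin.cons 1 s : Fin (n + 1) → ℤ)}).image
        (fun s => (Fin.cons 1 s : Fin (n + 1) → ℤ)) =
      (Finset.Icc j (n + 2)).image (skipRow (n + 1)) := by
  ext u
  simp only [Finset.mem_filter, mem_interlacing, Finset.mem_image, Finset.mem_Icc]
  constructor
  · rintro ⟨s, ⟨⟨h1, -⟩, h2⟩, rfl⟩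
    set u : Fin (n + 1) → ℤ := Fin.cons 1 s with hu
    have hlow : ∀ t : Fin (n + 1), (t.1 : ℤ) + 1 ≤ u t := by
      intro t
      induction t using Fin.induction with
      | zero => simp [hu]
      | succ t ih =>
        have := h2 (Fin.castSucc_lt_succ (i := t))
        simp only [Fin.val_castSucc, Fin.val_succ] at ih ⊢
        push_cast
        omega
    have hle : ∀ t, u t ≤ skipRow (n + 1) j t := by
      intro t
      refine Fin.cases ?_ (fun t => ?_) t
      · simp [hu, skipRow_zero_eq_one.2 hj]
      · simpa [hu] using (h1 t).2
    obtain ⟨i, hi1, hin, hi⟩ := exists_eq_skipRow h2 fun t => ⟨hlow t, (hle t).trans (by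
      unfold skipRow
      split_ifs <;> omega)⟩
    rw [hi] at hle
    exact ⟨i, ⟨(skipRow_le_iff hjn hi1).1 hle, hin⟩, hi.symm⟩
  · rintro ⟨i, hi, rfl⟩
    have hcons : (Fin.cons 1 (Fin.tail (skipRow (n + 1) i)) : Fin (n + 1) → ℤ) =
        skipRow (n + 1) i := by
      have h0 : skipRow (n + 1) i 0 = 1 := skipRow_zero_eq_one.2 (by omega)
      rw [← h0, Fin.cons_self_tail]
    refine ⟨Fin.tail (skipRow (n + 1) i), ⟨⟨fun t => ?_, ?_⟩, ?_⟩, hcons⟩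
    · simp only [Fin.tail, skipRow, Fin.val_castSucc, Fin.val_succ]
      push_cast
      split_ifs <;> omega
    · exact fun s t hst => skipRow_strictMono _ _ (Fin.succ_lt_succ_iff.2 hst)
    · rw [hcons]
      exact skipRow_strictMono _ _

theorem mtPoly_skipRow_eval_one {n j : ℕ} (hj : 2 ≤ j) (hjn : j ≤ n + 2) :
    (mtPoly (n + 1) (skipRow (n + 1) j)).eval (1 : ℚ) =
      ∑ i ∈ Finset.Icc j (n + 2), (mtCount (n + 1) (skipRow (n + 1) i) : ℚ) := by
  classical
  have h0 : skipRow (n + 1) j 0 = 1 := skipRow_zero_eq_one.2 hj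
  have h := mtPoly_eval_head (skipRow (n + 1) j)
  rw [h0, Int.cast_one] at h
  rw [h, ← Finset.sum_image (g := fun s => (Fin.cons 1 s : Fin (n + 1) → ℤ))
      (f := fun u => (mtCount (n + 1) u : ℚ)) (Fin.cons_right_injective (α := fun _ => ℤ) 1).injOn,
    image_cons_interlacing_skipRow hj hjn, Finset.sum_image]
  refine (skipRow_injOn (n + 1)).mono fun i hi => ?_
  simp only [Finset.coe_Icc, Set.mem_Icc] at hi ⊢
  omega

theorem mtPoly_eval_two (n : ℕ) :
    (mtPoly (n + 2) (fun i => (i.1 : ℤ) + 1)).eval (2 : ℚ) =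
      - ∑ j ∈ Finset.Icc 2 (n + 2), ((j : ℚ) - 1) * mtCount (n + 1) (skipRow (n + 1) j) := by
  have h := mtPoly_eval_head_add_one (fun i : Fin (n + 2) => (i.1 : ℤ) + 1)
  simp only [Fin.val_zero, Nat.cast_zero, zero_add, Int.cast_one] at h
  rw [one_add_one_eq_two] at h
  rw [h, interlacing_succ_filter, Finset.sum_image]
  · congr 1
    rw [Finset.sum_congr rfl fun j hj =>
      mtPoly_skipRow_eval_one (Finset.mem_Icc.1 hj).1 (Finset.mem_Icc.1 hj).2,
      Finset.sum_comm' (t' := Finset.Icc 2 (n + 2)) (s' := fun i => Finset.Icc 2 i)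
        (fun j i => by simp only [Finset.mem_Icc]; omega)]
    refine Finset.sum_congr rfl fun i hi => ?_
    rw [Finset.sum_const, Nat.card_Icc, nsmul_eq_mul,
      Nat.cast_sub (by have := (Finset.mem_Icc.1 hi).1; omega)]
    push_cast
    ring
  · refine (skipRow_injOn (n + 1)).mono fun i hi => ?_
    simp only [Finset.coe_Icc, Set.mem_Icc] at hi ⊢
    omega

theorem IsAlpha.eq_mtPoly_eval {n : ℕ} {f : (Fin (n + 1) → ℤ) → ℚ} (hf : IsAlpha (n + 1) f)
    {m : Fin n → ℤ} (hm : StrictMono m) (x : ℤ) :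
    f (Fin.cons x m) = (mtPoly n m).eval (x : ℚ) := by
  obtain ⟨P, -, hP⟩ := hf.1
  let p : ℚ[X] := MvPolynomial.aeval (Fin.cons X fun i => C (m i : ℚ) : Fin (n + 1) → ℚ[X]) P
  have hp : ∀ y : ℤ, p.eval (y : ℚ) = f (Fin.cons y m) := by
    intro y
    simp only [p]
    rw [hP, ← coe_evalRingHom, ← MvPolynomial.aeval_eq_eval, MvPolynomial.aeval_def,
      MvPolynomial.aeval_def, MvPolynomial.hom_eval₂]
    congr 1
    · exact Subsingleton.elim _ _
    · ext i
      refine Fin.cases ?_ (fun i => ?_) i <;> simp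
  obtain ⟨c, hc⟩ : ∃ c : ℤ, ∀ y < c, StrictMono (Fin.cons y m : Fin (n + 1) → ℤ) := by
    rcases n with _ | n
    · exact ⟨0, fun y _ i j hij => by omega⟩
    · exact ⟨m 0, fun y hy => strictMono_cons.2 ⟨hy, hm⟩⟩
  have heq : p = mtPoly n m := by
    refine Polynomial.eq_of_infinite_eval_eq _ _ (((Set.Iio_infinite c).image
      (Int.cast_injective (α := ℚ)).injOn).mono ?_)
    rintro _ ⟨y, hy, rfl⟩
    rw [Set.mem_ofPred_eq, hp, mtPoly_eval (hc y hy), hf.eq_mtCount (hc y hy)]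
  rw [← hp, heq]

/-- For every `n ≥ 2`,
`α(n+1; 2,1,2,3,…,n) = -Σ_{j=2}^{n} (j-1)·α(n-1; 1,…,ĵ,…,n)`,
where the `j`-th summand's argument is `(1,…,n)` with the entry `j` deleted
(this count equals the number of ASMs of size `n` whose first row's unique `1`
is in column `j`). -/
theorem alpha_2123n_weighted (n : ℕ) (hn : 2 ≤ n)
    (α1 : (Fin (n + 1) → ℤ) → ℚ) (hα1 : IsAlpha (n + 1) α1)
    (α2 : (Fin (n - 1) → ℤ) → ℚ) (hα2 : IsAlpha (n - 1) α2) :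
    α1 (fun j => if j.1 = 0 then 2 else (j.1 : ℤ)) =
      - ∑ j ∈ Finset.Icc 2 n,
          ((j : ℚ) - 1) *
            α2 (fun t => if t.1 + 1 < j then (t.1 : ℤ) + 1 else (t.1 : ℤ) + 2) := by
  obtain ⟨n, rfl⟩ : ∃ N, n = N + 2 := ⟨n - 2, by omega⟩
  have hm : StrictMono (fun i : Fin (n + 2) => (i.1 : ℤ) + 1) := fun i j hij => by
    simpa using hij
  have hrow : (fun j : Fin (n + 2 + 1) => if j.1 = 0 then 2 else (j.1 : ℤ)) =
      Fin.cons 2 (fun i : Fin (n + 2) => (i.1 : ℤ) + 1) := by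
    ext j
    refine Fin.cases ?_ (fun j => ?_) j <;> simp
  have heval := hα1.eq_mtPoly_eval hm 2
  rw [Int.cast_ofNat, mtPoly_eval_two] at heval
  rw [hrow, heval]
  congr 1
  refine Finset.sum_congr rfl fun j _ => ?_
  congr 1
  exact (hα2.eq_mtCount (skipRow_strictMono (n + 1) j)).symm
end
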